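/- The Zariski closure of the adjoint orbit of the Jordan matrix J_{μ}(z) (single eigenvalue z, Jordan block sizes given by the partition μ of n) in gl_n over an algebraically closed field is the disjoint union of the adjoint orbits of J_{ρ}(z) over all partitions ρ ⪯ μ in the dominance order. Equivalently, a matrix X with (X - z·Id) nilpotent lies in the closure of the orbit of J_μ(z) if and only if for all k ≥ 1, rank((X - z·Id)^k) ≤ rank((J_μ(z) - z·Id)^k), which is equivalent to the Jordan type of X being ⪯ μ in dominance order. -/

import Mathlib

/-!
STATEMENT 17. Over an algebraically closed field `K`, the Zariski closure of the adjoint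
orbit of the Jordan matrix `J_μ(z)` (single eigenvalue `z`, Jordan block sizes the parts of
the partition `μ` of `n`) is the disjoint union of the adjoint orbits of `J_ρ(z)` over all
partitions `ρ ⪯ μ` in the dominance order.  Equivalently, for `X` with `X - z·Id`
nilpotent, `X` lies in this closure iff `rank((X - z·Id)^k) ≤ rank((J_μ(z) - z·Id)^k)` for
all `k ≥ 1` (which is equivalent to the Jordan type of `X` being `⪯ μ`).
-/

open Matrix

/-- Partial sums of a list (positions of Jordan block boundaries). -/
def partialSums (l : List ℕ) : List ℕ :=
  (List.range l.length).map fun k => (l.take (k + 1)).sum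

/-- The Jordan matrix with single eigenvalue `z` and block sizes the parts of `μ`
(rows sorted decreasingly): `z` on the diagonal and `1` on the superdiagonal except at
block boundaries. -/
def jordanOf {K : Type*} [Field K] {n : ℕ} (z : K) (mu : Nat.Partition n) :
    Matrix (Fin n) (Fin n) K :=
  Matrix.of fun i j =>
    if (i : ℕ) = (j : ℕ) then z
    else if (j : ℕ) = (i : ℕ) + 1 ∧
        ((i : ℕ) + 1) ∉ partialSums ((mu.parts.sort (· ≤ ·)).reverse) then 1
    else 0

/-- The adjoint (conjugation) orbit of a matrix under `GL_n`. -/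
def adjOrbit {K : Type*} [Field K] {n : ℕ} (A : Matrix (Fin n) (Fin n) K) :
    Set (Matrix (Fin n) (Fin n) K) :=
  {B | ∃ g : (Matrix (Fin n) (Fin n) K)ˣ,
    B = (g : Matrix (Fin n) (Fin n) K) * A * ((g⁻¹ : (Matrix (Fin n) (Fin n) K)ˣ) :
      Matrix (Fin n) (Fin n) K)}

/-- The Zariski closure of a set of `n × n` matrices: the common zero locus of all
polynomial functions vanishing on the set. -/
def zariskiClosure {K : Type*} [Field K] {n : ℕ}
    (S : Set (Matrix (Fin n) (Fin n) K)) : Set (Matrix (Fin n) (Fin n) K) :=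
  {X | ∀ f : MvPolynomial (Fin n × Fin n) K,
    (∀ A ∈ S, MvPolynomial.eval (fun p => A p.1 p.2) f = 0) →
      MvPolynomial.eval (fun p => X p.1 p.2) f = 0}

/-- The dominance order on partitions of `n`: `ρ ⪯ μ` iff every partial sum of the
decreasingly sorted parts of `ρ` is at most the corresponding partial sum for `μ`. -/
def DominatedBy {n : ℕ} (rho mu : Nat.Partition n) : Prop :=
  ∀ k : ℕ, (((rho.parts.sort (· ≤ ·)).reverse.take k).sum)
    ≤ (((mu.parts.sort (· ≤ ·)).reverse.take k).sum)

/-!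
The ranks of the powers of a nilpotent matrix determine its conjugacy class, by the structure
theorem for modules over `K[X]`. For Jordan type `μ` these ranks are the numbers
`∑ i, max (μ i - k) 0`, and comparing them for two partitions is the dominance order, because the
partial sums of `μ` and these numbers are Legendre transforms of each other.

Conditions of the form `rank ((X - z) ^ k) ≤ r` are closed, so they pass to the closure of an orbit.
Conversely, let `rank (N ^ k) ≤ r k` for all `k`, where `r k` are the ranks of the powers of a
nilpotent matrix. Since `r` is convex, there is a flag `G k` with `dim (G k) = r k`, `G 0 = ⊤` and
`N (G k) ⊆ G (k + 1)`, and a map `Y` with `Y (G k) = G (k + 1)`. Every point of the line from `N` to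
`Y` maps `G k` into `G (k + 1)`, so its `k`-th power has rank at most `r k`. Equality holds at `Y`,
hence at a generic point of the line, and `N` lies in the closure of these points.
-/

section Excess

/-- The number of boxes outside the first `k` columns of the Young diagram with row lengths `s`,
which is also the rank of `N ^ k` for a nilpotent `N` with Jordan block sizes `s`. -/
def excess (s : Multiset ℕ) (k : ℕ) : ℕ :=
  (s.map (· - k)).sum

@[simp]
lemma excess_zero_right (s : Multiset ℕ) : excess s 0 = s.sum := by
  simp [excess]

@[simp]
lemma excess_cons (a : ℕ) (s : Multiset ℕ) (k : ℕ) :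
    excess (a ::ₘ s) k = a - k + excess s k := by
  simp [excess]

lemma excess_coe_cons (a : ℕ) (l : List ℕ) (k : ℕ) :
    excess (a :: l : List ℕ) k = a - k + excess l k := by
  rw [← Multiset.cons_coe, excess_cons]

lemma excess_eq_zero {s : Multiset ℕ} {k : ℕ} (h : ∀ a ∈ s, a ≤ k) : excess s k = 0 := by
  simpa [excess, Multiset.sum_eq_zero_iff, Nat.sub_eq_zero_iff_le] using h

lemma excess_antitone (s : Multiset ℕ) : Antitone (excess s) :=
  fun _ _ h => Multiset.sum_map_le_sum_map _ _ fun a _ => Nat.sub_le_sub_left h a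

/-- Convexity of a sequence of natural numbers: its successive differences increase. Both sides
are sums so that no truncated subtraction occurs. -/
def IsConvexSeq (r : ℕ → ℕ) : Prop :=
  ∀ ⦃i j⦄, i ≤ j → r (i + 1) + r j ≤ r i + r (j + 1)

lemma isConvexSeq_excess (s : Multiset ℕ) : IsConvexSeq (excess s) := by
  intro i j hij
  simp only [excess, ← Multiset.sum_map_add]
  exact Multiset.sum_map_le_sum_map _ _ fun a _ => by omega

lemma excess_add_excess_add_two (s : Multiset ℕ) (k : ℕ) :
    excess s k + excess s (k + 2) = 2 * excess s (k + 1) + s.count (k + 1) := by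
  induction s using Multiset.induction_on with
  | empty => simp [excess]
  | cons a s ih =>
    simp only [excess_cons, Multiset.count_cons]
    split_ifs <;> omega

lemma eq_of_excess_eq {s t : Multiset ℕ} (hs : 0 ∉ s) (ht : 0 ∉ t)
    (h : ∀ k, excess s k = excess t k) : s = t := by
  ext a
  rcases a with _ | k
  · rw [Multiset.count_eq_zero.2 hs, Multiset.count_eq_zero.2 ht]
  · have hsk := excess_add_excess_add_two s k
    have htk := excess_add_excess_add_two t k
    simp only [h] at hsk
    omega

lemma zero_notMem_parts {n : ℕ} (p : n.Partition) : 0 ∉ p.parts :=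
  fun h => (p.parts_pos h).ne rfl

lemma excess_parts_self {n : ℕ} (p : n.Partition) : excess p.parts n = 0 :=
  excess_eq_zero fun _ => Nat.Partition.le_of_mem_parts

lemma sum_take_le_mul_add_excess (l : List ℕ) (m k : ℕ) :
    (l.take m).sum ≤ m * k + excess l k := by
  induction l generalizing m with
  | nil => simp
  | cons a l ih =>
    rcases m with _ | m
    · simp
    · have := ih m
      simp only [List.take_succ_cons, List.sum_cons, excess_coe_cons, Nat.succ_mul]
      omega

lemma exists_sum_take_eq_mul_add_excess {l : List ℕ} (hl : l.Pairwise (· ≥ ·)) (k : ℕ) :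
    ∃ m, (l.take m).sum = m * k + excess l k := by
  induction l with
  | nil => exact ⟨0, by simp [excess]⟩
  | cons a l ih =>
    rw [List.pairwise_cons] at hl
    rcases le_or_gt a k with hak | hka
    · refine ⟨0, ?_⟩
      rw [excess_eq_zero (by simpa [hak] using fun b hb => (hl.1 b hb).trans hak)]
      simp
    · obtain ⟨m, hm⟩ := ih hl.2
      refine ⟨m + 1, ?_⟩
      rw [List.take_succ_cons, List.sum_cons, excess_coe_cons, Nat.succ_mul]
      omega

lemma sum_take_eq_mul_getD_add_excess {l : List ℕ} (hl : l.Pairwise (· ≥ ·)) (m : ℕ) :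
    (l.take m).sum = m * l.getD m 0 + excess l (l.getD m 0) := by
  induction l generalizing m with
  | nil => simp [excess]
  | cons a l ih =>
    rw [List.pairwise_cons] at hl
    rcases m with _ | m
    · rw [List.getD_cons_zero, excess_eq_zero (by simpa using hl.1)]
      simp
    · have hle : l.getD m 0 ≤ a := by
        rcases lt_or_ge m l.length with hm | hm
        · simpa [hm] using hl.1 _ (l.getElem_mem hm)
        · simp [hm]
      rw [List.take_succ_cons, List.sum_cons, List.getD_cons_succ, excess_coe_cons, Nat.succ_mul,
        ih hl.2]
      omega

/-- The partial sum `(l.take m).sum` is the minimum of `m * k + excess l k` over all `k`. -/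
lemma forall_sum_take_le_iff_forall_excess_le {l l' : List ℕ} (hl : l.Pairwise (· ≥ ·))
    (hl' : l'.Pairwise (· ≥ ·)) :
    (∀ m, (l.take m).sum ≤ (l'.take m).sum) ↔ ∀ k, excess l k ≤ excess l' k := by
  refine ⟨fun h k => ?_, fun h m => ?_⟩
  · obtain ⟨m, hm⟩ := exists_sum_take_eq_mul_add_excess hl k
    have := (h m).trans (sum_take_le_mul_add_excess l' m k)
    omega
  · rw [sum_take_eq_mul_getD_add_excess hl']
    exact (sum_take_le_mul_add_excess l m _).trans (Nat.add_le_add_left (h _) _)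

/-- The row lengths of a partition in decreasing order, as they enter `jordanOf` and
`DominatedBy`. -/
abbrev sortedParts {n : ℕ} (p : n.Partition) : List ℕ :=
  (p.parts.sort (· ≤ ·)).reverse

lemma coe_sortedParts {n : ℕ} (p : n.Partition) : (sortedParts p : Multiset ℕ) = p.parts := by
  rw [Multiset.coe_reverse, Multiset.sort_eq]

lemma dominatedBy_iff_excess_le {n : ℕ} {rho mu : n.Partition} :
    DominatedBy rho mu ↔ ∀ k, excess rho.parts k ≤ excess mu.parts k := by
  have pairwise_sortedParts (p : n.Partition) : (sortedParts p).Pairwise (· ≥ ·) :=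
    List.pairwise_reverse.2 (Multiset.pairwise_sort _ _)
  rw [← coe_sortedParts rho, ← coe_sortedParts mu]
  exact forall_sum_take_le_iff_forall_excess_le (pairwise_sortedParts _) (pairwise_sortedParts _)

end Excess

section JordanBlocks

open Module Polynomial

variable {K V ι ι' : Type*} [Field K] [AddCommGroup V] [Module K V]

/-- `N` has Jordan blocks of sizes `e i` and eigenvalue `0`. This is encoded without a basis: as a
`K[X]`-module with `X` acting as `N`, the space is the product of the modules `K[X] / (X ^ e i)`.
Blocks of size `0` are allowed and contribute nothing. -/
def HasBlockSizes (N : End K V) (e : ι → ℕ) : Prop :=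
  Nonempty (AEval' N ≃ₗ[K[X]] ∀ i, K[X] ⧸ Ideal.span {(X : K[X]) ^ e i})

lemma X_pow_dvd_X_pow_mul_iff (a k : ℕ) (p : K[X]) :
    (X : K[X]) ^ a ∣ X ^ k * p ↔ X ^ (a - k) ∣ p := by
  rcases le_total k a with h | h
  · rw [← pow_mul_pow_sub _ h, mul_dvd_mul_iff_left (pow_ne_zero _ X_ne_zero)]
  · simpa [Nat.sub_eq_zero_of_le h] using (pow_dvd_pow _ h).mul_right p

lemma finrank_range_lsmul_X_pow [Fintype ι] (e : ι → ℕ) (k : ℕ) :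
    finrank K (LinearMap.range (LinearMap.lsmul K[X]
      (∀ i, K[X] ⧸ Ideal.span {(X : K[X]) ^ e i}) (X ^ k))) = ∑ i, (e i - k) := by
  classical
  let quot : (ι → K[X]) →ₗ[K[X]] ∀ i, K[X] ⧸ Ideal.span {(X : K[X]) ^ e i} :=
    LinearMap.pi fun i => Submodule.mkQ _ ∘ₗ LinearMap.proj i
  have range_quot : LinearMap.range quot = ⊤ := LinearMap.range_eq_top.2 fun y =>
    ⟨fun i => (y i).out, funext fun i => Submodule.Quotient.mk_out (y i)⟩
  have ker_lsmul_comp_quot : LinearMap.ker (LinearMap.lsmul K[X] _ (X ^ k) ∘ₗ quot) =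
      Submodule.pi Set.univ fun i => Ideal.span {(X : K[X]) ^ (e i - k)} := by
    ext p
    simp only [LinearMap.mem_ker, LinearMap.comp_apply, LinearMap.lsmul_apply, ← map_smul,
      funext_iff, Submodule.mem_pi, Set.mem_univ, forall_const]
    refine forall_congr' fun i => ?_
    rw [Ideal.mem_span_singleton, ← X_pow_dvd_X_pow_mul_iff, ← Ideal.mem_span_singleton]
    exact Ideal.Quotient.eq_zero_iff_mem
  have (i : ι) : Module.Finite K (K[X] ⧸ Ideal.span {(X : K[X]) ^ (e i - k)}) :=
    (monic_X_pow _).finite_quotient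
  rw [← LinearMap.range_comp_of_range_eq_top _ range_quot,
    ← ((LinearMap.quotKerEquivRange _).restrictScalars K).finrank_eq, ker_lsmul_comp_quot,
    ((Submodule.quotientPi _).restrictScalars K).finrank_eq, finrank_pi_fintype]
  simp [finrank_quotient_span_eq_natDegree]

lemma HasBlockSizes.finrank_range_pow [Fintype ι] {N : End K V} {e : ι → ℕ}
    (h : HasBlockSizes N e) (k : ℕ) :
    finrank K (LinearMap.range (N ^ k)) = excess (Finset.univ.val.map e) k := by
  obtain ⟨φ⟩ := h
  let E : V ≃ₗ[K] ∀ i, K[X] ⧸ Ideal.span {(X : K[X]) ^ e i} :=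
    AEval'.of N ≪≫ₗ φ.restrictScalars K
  have X_pow_smul_E (v : V) : (X : K[X]) ^ k • E v = E ((N ^ k) v) := by
    change X ^ k • φ (AEval'.of N v) = φ (AEval'.of N ((N ^ k) v))
    rw [← map_smul, AEval'.X_pow_smul_of, Module.End.smul_def]
  have map_range : (LinearMap.range (N ^ k)).map E.toLinearMap =
      (LinearMap.range (LinearMap.lsmul K[X] _ (X ^ k))).restrictScalars K := by
    ext y
    simp only [Submodule.mem_map, LinearMap.mem_range, exists_exists_eq_and, LinearEquiv.coe_coe,
      Submodule.restrictScalars_mem, LinearMap.lsmul_apply, ← X_pow_smul_E, E.surjective.exists]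
  rw [← E.finrank_map_eq, map_range, excess, Multiset.map_map]
  exact finrank_range_lsmul_X_pow e k

lemma HasBlockSizes.of_comp_equiv {N : End K V} {e : ι → ℕ} (σ : ι' ≃ ι)
    (h : HasBlockSizes N (e ∘ σ)) : HasBlockSizes N e :=
  h.map fun φ => φ ≪≫ₗ
    LinearEquiv.piCongrLeft K[X] (fun i => K[X] ⧸ Ideal.span {(X : K[X]) ^ e i}) σ

lemma exists_eq_comp_equiv_of_map_univ_eq [Fintype ι] [Fintype ι'] {f : ι → ℕ} {g : ι' → ℕ}
    (h : Finset.univ.val.map f = Finset.univ.val.map g) : ∃ σ : ι ≃ ι', f = g ∘ σ := by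
  have card_fiber_eq (a : ℕ) : Fintype.card {i // f i = a} = Fintype.card {i // g i = a} := by
    have := congrArg (Multiset.count a) h
    simpa [Multiset.count_map, Fintype.card_subtype, Finset.card_def, eq_comm] using this
  refine ⟨Equiv.ofFiberEquiv fun a => Fintype.equivOfCardEq (card_fiber_eq a), ?_⟩
  exact funext fun i => (Equiv.ofFiberEquiv_map _ i).symm

lemma HasBlockSizes.isConj {N N' : End K V} {e : ι → ℕ} (h : HasBlockSizes N e)
    (h' : HasBlockSizes N' e) : IsConj N N' := by
  obtain ⟨φ⟩ := h
  obtain ⟨φ'⟩ := h'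
  let E : V ≃ₗ[K] V :=
    AEval'.of N ≪≫ₗ (φ ≪≫ₗ φ'.symm).restrictScalars K ≪≫ₗ (AEval'.of N').symm
  refine ⟨(LinearMap.GeneralLinearGroup.generalLinearEquiv K V).symm E, LinearMap.ext fun v => ?_⟩
  change (AEval'.of N').symm (φ'.symm (φ (AEval'.of N (N v)))) =
    N' ((AEval'.of N').symm (φ'.symm (φ (AEval'.of N v))))
  rw [← AEval'.X_smul_of, map_smul, map_smul, AEval'.of_symm_X_smul]

lemma HasBlockSizes.subtype_ne_zero {N : End K V} {e : ι → ℕ} (h : HasBlockSizes N e) :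
    HasBlockSizes N fun i : {i // e i ≠ 0} => e i := by
  classical
  refine h.map fun φ => φ ≪≫ₗ LinearEquiv.ofBijective
    (LinearMap.pi fun i : {i // e i ≠ 0} => LinearMap.proj i.1) ⟨fun x y hxy => ?_, fun y => ?_⟩
  · refine funext fun i => ?_
    by_cases hi : e i = 0
    · have : Subsingleton (K[X] ⧸ Ideal.span {(X : K[X]) ^ e i}) := by
        simp [hi]
      exact Subsingleton.elim _ _
    · exact congrFun hxy ⟨i, hi⟩
  · exact ⟨fun i => if hi : e i ≠ 0 then y ⟨i, hi⟩ else 0, funext fun i => dif_pos i.2⟩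

lemma exists_hasBlockSizes [FiniteDimensional K V] {N : End K V} (hN : IsNilpotent N) :
    ∃ (d : ℕ) (e : Fin d → ℕ), HasBlockSizes N e := by
  obtain ⟨m, hm⟩ := hN
  have isTorsion' : IsTorsion' (AEval' N) (Submonoid.powers (X : K[X])) :=
    (Submodule.isTorsion'_powers_iff X).2 fun v => ⟨m, by
      obtain ⟨v, rfl⟩ := (AEval'.of N).surjective v
      simp [AEval'.X_pow_smul_of, hm]⟩
  obtain ⟨d, e, ⟨φ⟩⟩ := torsion_by_prime_power_decomposition irreducible_X isTorsion'
  exact ⟨d, e, ⟨φ ≪≫ₗ DirectSum.linearEquivFunOnFintype K[X] (Fin d) _⟩⟩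

lemma exists_pos_hasBlockSizes [FiniteDimensional K V] {N : End K V} (hN : IsNilpotent N) :
    ∃ (ι : Type) (_ : Fintype ι) (e : ι → ℕ),
      0 ∉ Finset.univ.val.map e ∧ HasBlockSizes N e := by
  obtain ⟨d, e, he⟩ := exists_hasBlockSizes hN
  exact ⟨{i // e i ≠ 0}, inferInstance, fun i => e i, by simp, he.subtype_ne_zero⟩

lemma exists_partition_finrank_range_pow_eq_excess [FiniteDimensional K V] {N : End K V}
    (hN : IsNilpotent N) :
    ∃ p : (finrank K V).Partition, ∀ k, finrank K (LinearMap.range (N ^ k)) = excess p.parts k := by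
  obtain ⟨ι, _, e, he, hNe⟩ := exists_pos_hasBlockSizes hN
  refine ⟨⟨Finset.univ.val.map e, fun h => Nat.pos_of_ne_zero (ne_of_mem_of_not_mem h he), ?_⟩,
    hNe.finrank_range_pow⟩
  rw [← excess_zero_right, ← hNe.finrank_range_pow, pow_zero, Module.End.one_eq_id,
    LinearMap.range_id, finrank_top]

lemma isConj_of_finrank_range_pow_eq [FiniteDimensional K V] {N N' : End K V}
    (hN : IsNilpotent N)
    (h : ∀ k, finrank K (LinearMap.range (N ^ k)) = finrank K (LinearMap.range (N' ^ k))) :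
    IsConj N N' := by
  have hN' : IsNilpotent N' := by
    obtain ⟨m, hm⟩ := hN
    refine ⟨m, LinearMap.range_eq_bot.1 (Submodule.finrank_eq_zero.1 ?_)⟩
    rw [← h, hm, LinearMap.range_zero, finrank_bot]
  obtain ⟨ι, _, e, he, hNe⟩ := exists_pos_hasBlockSizes hN
  obtain ⟨ι', _, e', he', hNe'⟩ := exists_pos_hasBlockSizes hN'
  obtain ⟨σ, rfl⟩ := exists_eq_comp_equiv_of_map_univ_eq <| eq_of_excess_eq he he' fun k => by
    rw [← hNe.finrank_range_pow, h, hNe'.finrank_range_pow]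
  exact (hNe.of_comp_equiv σ).isConj hNe'

end JordanBlocks

section Subspaces

open Module

variable {K V V₂ : Type*} [Field K] [AddCommGroup V] [Module K V] [AddCommGroup V₂] [Module K V₂]

lemma exists_isCompl_sup_inf_eq {A B : Submodule K V} (h : A ≤ B) :
    ∃ W, IsCompl A W ∧ A ⊔ W ⊓ B = B := by
  obtain ⟨W, hW⟩ := A.exists_isCompl
  exact ⟨W, hW, by rw [← sup_inf_assoc_of_le W h, hW.sup_eq_top, top_inf_eq]⟩

lemma finrank_sup_of_disjoint [FiniteDimensional K V] {A B : Submodule K V} (h : Disjoint A B) :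
    finrank K ↥(A ⊔ B) = finrank K A + finrank K B := by
  rw [← Submodule.finrank_sup_add_finrank_inf_eq, h.eq_bot, finrank_bot, add_zero]

lemma exists_le_finrank_eq (W : Submodule K V) {d : ℕ} (hd : d ≤ finrank K W) :
    ∃ U ≤ W, finrank K U = d := by
  obtain ⟨b, hb⟩ := exists_linearIndependent_of_le_finrank hd
  refine ⟨(Submodule.span K (Set.range b)).map W.subtype, Submodule.map_subtype_le _ _, ?_⟩
  rw [Submodule.finrank_map_subtype_eq, finrank_span_eq_card hb, Fintype.card_fin]

lemma exists_between_finrank_eq [FiniteDimensional K V] {A B : Submodule K V} (h : A ≤ B) {d : ℕ}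
    (hA : finrank K A ≤ d) (hB : d ≤ finrank K B) : ∃ G, A ≤ G ∧ G ≤ B ∧ finrank K G = d := by
  obtain ⟨W, hAW, hsup⟩ := exists_isCompl_sup_inf_eq h
  have hdisj : Disjoint A (W ⊓ B) := hAW.disjoint.mono_right inf_le_left
  have hfinrank := finrank_sup_of_disjoint hdisj
  rw [hsup] at hfinrank
  obtain ⟨U, hU, hUd⟩ := exists_le_finrank_eq (W ⊓ B) (d := d - finrank K A) (by omega)
  refine ⟨A ⊔ U, le_sup_left, sup_le h (hU.trans inf_le_right), ?_⟩
  rw [finrank_sup_of_disjoint (hdisj.mono_right hU)]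
  omega

lemma exists_comparable_finrank_eq [FiniteDimensional K V] {C : ℕ → Submodule K V}
    (hC : Monotone C) {m d : ℕ} (h0 : finrank K (C 0) ≤ d) (hm : d ≤ finrank K (C m)) :
    ∃ G, C 0 ≤ G ∧ G ≤ C m ∧ finrank K G = d ∧ ∀ j, C j ≤ G ∨ G ≤ C j := by
  induction m with
  | zero =>
    exact ⟨C 0, le_rfl, le_rfl, h0.antisymm hm, fun j => Or.inr (hC j.zero_le)⟩
  | succ m ih =>
    rcases le_total d (finrank K (C m)) with h | h
    · obtain ⟨G, hG0, hGm, hG⟩ := ih h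
      exact ⟨G, hG0, hGm.trans (hC m.le_succ), hG⟩
    · obtain ⟨G, hmG, hGm, hGd⟩ := exists_between_finrank_eq (hC m.le_succ) h hm
      refine ⟨G, (hC m.zero_le).trans hmG, hGm, hGd, fun j => ?_⟩
      exact (le_or_gt j m).imp (fun hj => (hC hj).trans hmG) fun hj => hGm.trans (hC hj)

lemma finrank_map_add_finrank_inf_ker [FiniteDimensional K V] (f : V →ₗ[K] V₂)
    (W : Submodule K V) :
    finrank K (W.map f) + finrank K ↥(LinearMap.ker f ⊓ W) = finrank K W := by
  rw [← (f.domRestrict W).finrank_range_add_finrank_ker, LinearMap.range_domRestrict,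
    LinearMap.ker_domRestrict, ← Submodule.finrank_map_subtype_eq W, Submodule.map_comap_subtype,
    inf_comm]

lemma exists_map_eq_of_finrank_le [FiniteDimensional K V] [FiniteDimensional K V₂]
    (C : Submodule K V) (D : Submodule K V₂) (h : finrank K D ≤ finrank K C) :
    ∃ f : V →ₗ[K] V₂, C.map f = D := by
  obtain ⟨v, hv⟩ := finrank_le_iff_exists_linearMap.1 h
  obtain ⟨u, huv⟩ := v.exists_leftInverse_of_injective (LinearMap.ker_eq_bot.2 hv)
  obtain ⟨f, hf⟩ := (D.subtype ∘ₗ u).exists_extend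
  have range_u : LinearMap.range u = ⊤ :=
    LinearMap.range_eq_top.2 fun y => ⟨v y, LinearMap.congr_fun huv y⟩
  exact ⟨f, by rw [← LinearMap.range_domRestrict, LinearMap.domRestrict, hf,
    LinearMap.range_comp_of_range_eq_top _ range_u, Submodule.range_subtype]⟩

lemma exists_eqOn_map_eq [FiniteDimensional K V] [FiniteDimensional K V₂]
    {A' A : Submodule K V} {B' B : Submodule K V₂} (hA : A' ≤ A) (hB : B' ≤ B)
    (hdim : finrank K B + finrank K A' ≤ finrank K A + finrank K B')
    {f : V →ₗ[K] V₂} (hf : A'.map f = B') :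
    ∃ F : V →ₗ[K] V₂, Set.EqOn F f A' ∧ A.map F = B := by
  obtain ⟨W, hW, hA'W⟩ := exists_isCompl_sup_inf_eq hA
  obtain ⟨W₂, hW₂, hB'W₂⟩ := exists_isCompl_sup_inf_eq hB
  have finrank_A := finrank_sup_of_disjoint (hW.disjoint.mono_right (inf_le_left (b := A)))
  have finrank_B := finrank_sup_of_disjoint (hW₂.disjoint.mono_right (inf_le_left (b := B)))
  rw [hA'W] at finrank_A
  rw [hB'W₂] at finrank_B
  obtain ⟨g, hg⟩ := exists_map_eq_of_finrank_le (W ⊓ A) (W₂ ⊓ B) (by omega)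
  let F : V →ₗ[K] V₂ := LinearMap.ofIsCompl hW (f.domRestrict A') (g.domRestrict W)
  have F_eqOn_A' : Set.EqOn F f A' := fun x hx => LinearMap.ofIsCompl_apply_left hW ⟨x, hx⟩
  have F_eqOn_W : Set.EqOn F g W := fun x hx => LinearMap.ofIsCompl_apply_right hW ⟨x, hx⟩
  have map_A' : A'.map F = B' := by
    rw [← hf]
    exact SetLike.coe_injective F_eqOn_A'.image_eq
  have map_W : (W ⊓ A).map F = W₂ ⊓ B := by
    rw [← hg]
    exact SetLike.coe_injective (F_eqOn_W.mono inf_le_left).image_eq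
  exact ⟨F, F_eqOn_A', by rw [← hA'W, Submodule.map_sup, map_A', map_W, hB'W₂]⟩

lemma exists_map_flag_eq [FiniteDimensional K V] [FiniteDimensional K V₂]
    {A : ℕ → Submodule K V} {B : ℕ → Submodule K V₂} (hA : Antitone A) (hB : Antitone B)
    (hdim : ∀ k, finrank K (B k) + finrank K (A (k + 1)) ≤
      finrank K (A k) + finrank K (B (k + 1)))
    {m : ℕ} (hm : B m = ⊥) : ∃ f : V →ₗ[K] V₂, ∀ k, (A k).map f = B k := by
  induction m generalizing A B with
  | zero =>
    refine ⟨0, fun k => ?_⟩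
    rw [Submodule.map_zero, eq_comm, ← le_bot_iff, ← hm]
    exact hB k.zero_le
  | succ m ih =>
    obtain ⟨f, hf⟩ := ih (A := fun k => A (k + 1)) (B := fun k => B (k + 1))
      (fun _ _ h => hA (Nat.succ_le_succ h)) (fun _ _ h => hB (Nat.succ_le_succ h))
      (fun k => hdim (k + 1)) hm
    obtain ⟨F, F_eqOn, hF⟩ :=
      exists_eqOn_map_eq (hA (Nat.le_succ 0)) (hB (Nat.le_succ 0)) (hdim 0) (hf 0)
    refine ⟨F, fun k => ?_⟩
    rcases k with _ | k
    · exact hF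
    · rw [← hf k]
      exact SetLike.coe_injective (F_eqOn.mono (hA (Nat.succ_le_succ k.zero_le))).image_eq

end Subspaces

section Flags

open Module

variable {K V : Type*} [Field K] [AddCommGroup V] [Module K V]

lemma range_pow_succ_eq_map (N : End K V) (k : ℕ) :
    LinearMap.range (N ^ (k + 1)) = (LinearMap.range (N ^ k)).map N := by
  rw [pow_succ', Module.End.mul_eq_comp, LinearMap.range_comp]

lemma range_pow_le_of_map_le {N : End K V} {G : ℕ → Submodule K V} (h0 : G 0 = ⊤)
    (h : ∀ k, (G k).map N ≤ G (k + 1)) (k : ℕ) : LinearMap.range (N ^ k) ≤ G k := by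
  induction k with
  | zero => exact h0 ▸ le_top
  | succ k ih => exact range_pow_succ_eq_map N k ▸ (Submodule.map_mono ih).trans (h k)

lemma range_pow_eq_of_map_eq {N : End K V} {G : ℕ → Submodule K V} (h0 : G 0 = ⊤)
    (h : ∀ k, (G k).map N = G (k + 1)) (k : ℕ) : LinearMap.range (N ^ k) = G k := by
  induction k with
  | zero => rw [h0, pow_zero, Module.End.one_eq_id, LinearMap.range_id]
  | succ k ih => rw [range_pow_succ_eq_map, ih, h]

/-- The `N`-invariant subspace `W` has dimension `r 0`, and the ranks of the powers of the
restriction of `N` to `W` are bounded by `r`. This is the invariant maintained while building a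
flag with dimensions `r` from the top down. -/
structure IsRankBounded (N : End K V) (r : ℕ → ℕ) (W : Submodule K V) : Prop where
  map_le : W.map N ≤ W
  finrank_eq : finrank K W = r 0
  finrank_map_pow_le (j : ℕ) : finrank K (W.map (N ^ j)) ≤ r j

lemma IsRankBounded.eq_bot [FiniteDimensional K V] {N : End K V} {r : ℕ → ℕ} {W : Submodule K V}
    (hW : IsRankBounded N r W) (h0 : r 0 = 0) : W = ⊥ :=
  Submodule.finrank_eq_zero.1 (hW.finrank_eq.trans h0)

lemma IsRankBounded.le_ker_pow [FiniteDimensional K V] {N : End K V} {r : ℕ → ℕ}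
    {W : Submodule K V} (hW : IsRankBounded N r W) {m : ℕ} (hm : r m = 0) :
    W ≤ LinearMap.ker (N ^ m) := by
  rw [LinearMap.le_ker_iff_map, ← Submodule.finrank_eq_zero, ← Nat.le_zero, ← hm]
  exact hW.finrank_map_pow_le m

lemma IsRankBounded.finrank_map_pow_le_succ [FiniteDimensional K V] {N : End K V} {r : ℕ → ℕ}
    {W : Submodule K V} (hW : IsRankBounded N r W) (hr : IsConvexSeq r) {G : Submodule K V}
    (hG : finrank K G = r 1) {j : ℕ}
    (h : LinearMap.ker (N ^ j) ⊓ W ≤ G ∨ G ≤ W.map N ⊔ LinearMap.ker (N ^ j) ⊓ W) :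
    finrank K (G.map (N ^ j)) ≤ r (j + 1) := by
  rcases h with h | h
  · have ker_le := Submodule.finrank_mono (le_inf inf_le_left h)
    have finrank_W := finrank_map_add_finrank_inf_ker (N ^ j) W
    have finrank_G := finrank_map_add_finrank_inf_ker (N ^ j) G
    have map_W_le := hW.finrank_map_pow_le j
    have convex : r 1 + r j ≤ r 0 + r (j + 1) := hr j.zero_le
    rw [hW.finrank_eq] at finrank_W
    omega
  · have map_le : G.map (N ^ j) ≤ W.map (N ^ (j + 1)) := by
      refine (Submodule.map_mono h).trans ?_
      rw [Submodule.map_sup, ← Submodule.map_comp, ← Module.End.mul_eq_comp, ← pow_succ]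
      exact sup_le le_rfl ((LinearMap.le_ker_iff_map.1 inf_le_left).trans_le bot_le)
    exact (Submodule.finrank_mono map_le).trans (hW.finrank_map_pow_le _)

/-- The new subspace is squeezed between consecutive members of the chain
`N W + (ker N ^ j ∩ W)`, which makes it comparable with all of them: below the `j`-th one the rank
of `N ^ j` is controlled by `N ^ (j + 1)` on `W`, above it by the size of `ker N ^ j ∩ W`. -/
lemma IsRankBounded.exists_succ [FiniteDimensional K V] {N : End K V} {r : ℕ → ℕ}
    {W : Submodule K V} (hW : IsRankBounded N r W) (hr : IsConvexSeq r) (hanti : Antitone r)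
    {m : ℕ} (hm : r m = 0) :
    ∃ G, IsRankBounded N (fun j => r (j + 1)) G ∧ W.map N ≤ G ∧ G ≤ W := by
  let C : ℕ → Submodule K V := fun j => W.map N ⊔ LinearMap.ker (N ^ j) ⊓ W
  have C_mono : Monotone C := monotone_nat_of_le_succ fun j => by
    refine sup_le_sup_left (inf_le_inf_right _ ?_) _
    rw [pow_succ']
    exact LinearMap.ker_le_ker_comp _ _
  have C_zero : C 0 = W.map N := by simp [C, Module.End.one_eq_id]
  have C_m : C m = W := by
    simp only [C, inf_eq_right.2 (hW.le_ker_pow hm), sup_eq_right.2 hW.map_le]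
  obtain ⟨G, hNG, hGW, finrank_G, hG⟩ := exists_comparable_finrank_eq C_mono (m := m) (d := r 1)
    (by rw [C_zero, ← pow_one N]; exact hW.finrank_map_pow_le 1)
    (by rw [C_m, hW.finrank_eq]; exact hanti zero_le_one)
  rw [C_zero] at hNG
  rw [C_m] at hGW
  exact ⟨G, ⟨(Submodule.map_mono hGW).trans hNG, finrank_G, fun j =>
    hW.finrank_map_pow_le_succ hr finrank_G ((hG j).imp_left le_sup_right.trans)⟩, hNG, hGW⟩

lemma IsRankBounded.exists_flag [FiniteDimensional K V] {N : End K V} {r : ℕ → ℕ}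
    {W : Submodule K V} (hW : IsRankBounded N r W) (hr : IsConvexSeq r) (hanti : Antitone r)
    {m : ℕ} (hm : r m = 0) :
    ∃ G : ℕ → Submodule K V, G 0 = W ∧ Antitone G ∧ (∀ k, finrank K (G k) = r k) ∧
      ∀ k, (G k).map N ≤ G (k + 1) := by
  induction m generalizing r W with
  | zero =>
    have r_eq_zero (k : ℕ) : r k = 0 := Nat.le_zero.1 (hm ▸ hanti k.zero_le)
    exact ⟨fun _ => ⊥, (hW.eq_bot hm).symm, antitone_const, by simp [r_eq_zero], by simp⟩
  | succ m ih =>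
    obtain ⟨W', hW', hNW, hW'W⟩ := hW.exists_succ hr hanti hm
    obtain ⟨G, rfl, G_anti, finrank_G, map_G⟩ := ih hW'
      (fun _ _ h => hr (Nat.succ_le_succ h)) (fun _ _ h => hanti (Nat.succ_le_succ h)) hm
    refine ⟨fun k => k.casesOn W G, rfl, antitone_nat_of_succ_le ?_, ?_, ?_⟩
    · rintro (_ | k)
      exacts [hW'W, G_anti k.le_succ]
    · rintro (_ | k)
      exacts [hW.finrank_eq, finrank_G k]
    · rintro (_ | k)
      exacts [hNW, map_G k]

lemma exists_finrank_range_pow_lineMap_le [FiniteDimensional K V] (N : End K V) {r : ℕ → ℕ}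
    (hr : IsConvexSeq r) (hanti : Antitone r) {m : ℕ} (hm : r m = 0) (h0 : r 0 = finrank K V)
    (hN : ∀ k, finrank K (LinearMap.range (N ^ k)) ≤ r k) :
    ∃ Y : End K V, (∀ k, finrank K (LinearMap.range (Y ^ k)) = r k) ∧
      ∀ (t : K) k, finrank K (LinearMap.range (AffineMap.lineMap N Y t ^ k)) ≤ r k := by
  have top_bounded : IsRankBounded N r ⊤ :=
    ⟨le_top, by rw [finrank_top, h0], fun j => by rw [Submodule.map_top]; exact hN j⟩
  obtain ⟨G, G_zero, G_anti, finrank_G, map_N⟩ := top_bounded.exists_flag hr hanti hm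
  have G_m : G (m + 1) = ⊥ := by
    rw [← Submodule.finrank_eq_zero, finrank_G, ← Nat.le_zero, ← hm]
    exact hanti m.le_succ
  obtain ⟨Y, map_Y⟩ := exists_map_flag_eq (B := fun k => G (k + 1)) G_anti
    (fun _ _ h => G_anti (Nat.succ_le_succ h))
    (fun k => by simpa only [finrank_G] using hr k.le_succ) G_m
  refine ⟨Y, fun k => by rw [range_pow_eq_of_map_eq G_zero map_Y, finrank_G], fun t k => ?_⟩
  have map_lineMap (k : ℕ) : (G k).map (AffineMap.lineMap N Y t) ≤ G (k + 1) := by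
    rintro _ ⟨x, hx, rfl⟩
    rw [AffineMap.lineMap_apply_module]
    exact add_mem (Submodule.smul_mem _ _ (map_N k ⟨x, hx, rfl⟩))
      (Submodule.smul_mem _ _ ((map_Y k).le ⟨x, hx, rfl⟩))
  exact (Submodule.finrank_mono (range_pow_le_of_map_le G_zero map_lineMap k)).trans_eq
    (finrank_G k)

end Flags

section JordanMatrix

variable {K : Type*} [Field K] {n : ℕ}

lemma rank_toMatrix_pequiv {ι κ : Type*} [Fintype ι] [Fintype κ] [DecidableEq κ] (f : ι ≃. κ) :
    (f.toMatrix : Matrix ι κ K).rank = Fintype.card {i // (f i).isSome} := by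
  let image (i : {i // (f i).isSome}) : κ := (f i).get i.2
  have image_mem (i : {i // (f i).isSome}) : image i ∈ f i := Option.get_mem i.2
  have image_injective : Function.Injective image := fun i i' h =>
    Subtype.ext (f.inj (image_mem i) (h ▸ image_mem i'))
  have row_of_isSome (i : {i // (f i).isSome}) :
      (f.toMatrix : Matrix ι κ K).row i = Pi.basisFun K κ (image i) := by
    ext j
    simp [PEquiv.toMatrix_apply, Option.mem_def.1 (image_mem i), Pi.single_apply, eq_comm]
  have row_of_not_isSome {i : ι} (hi : ¬(f i).isSome) : (f.toMatrix : Matrix ι κ K).row i = 0 := by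
    ext j
    simp [PEquiv.toMatrix_apply, Option.not_isSome_iff_eq_none.1 hi]
  have span_rows : Submodule.span K (Set.range (f.toMatrix : Matrix ι κ K).row) =
      Submodule.span K (Set.range (Pi.basisFun K κ ∘ image)) := by
    refine le_antisymm (Submodule.span_le.2 ?_) (Submodule.span_mono ?_)
    · rintro _ ⟨i, rfl⟩
      by_cases hi : (f i).isSome
      · exact Submodule.subset_span ⟨⟨i, hi⟩, (row_of_isSome ⟨i, hi⟩).symm⟩
      · exact row_of_not_isSome hi ▸ Submodule.zero_mem _
    · rintro _ ⟨i, rfl⟩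
      exact ⟨i, row_of_isSome i⟩
  rw [Matrix.rank_eq_finrank_span_row, span_rows,
    finrank_span_eq_card ((Pi.basisFun K κ).linearIndependent.comp image image_injective)]

/-- The partial map `i ↦ i + k` on `Fin n`, defined where no element of `S` lies in
`(i, i + k]`. Its matrix is the `k`-th power of the nilpotent Jordan matrix whose blocks end at the
elements of `S`. -/
def cutShift (n : ℕ) (S : List ℕ) (k : ℕ) : Fin n ≃. Fin n where
  toFun i := if h : (i : ℕ) + k < n ∧ ∀ m ∈ S, m ≤ i ∨ i + k < m then some ⟨i + k, h.1⟩ else none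
  invFun j :=
    if k ≤ (j : ℕ) ∧ ∀ m ∈ S, m ≤ j - k ∨ j < m then some ⟨j - k, by omega⟩ else none
  inv i j := by
    simp only [Option.ite_none_right_eq_some, Option.dite_none_right_eq_some, Option.some_inj,
      Fin.ext_iff]
    constructor
    · rintro ⟨⟨hk, hS⟩, hi⟩
      have hij : (i : ℕ) + k = j := by omega
      exact ⟨⟨hij ▸ j.2, by simpa only [hi, hij] using hS⟩, hij⟩
    · rintro ⟨⟨-, hS⟩, hj⟩
      have hij : (j : ℕ) - k = i := by omega
      exact ⟨⟨by omega, by simpa only [hij, hj] using hS⟩, hij⟩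

lemma mem_cutShift {S : List ℕ} {k : ℕ} {i j : Fin n} :
    j ∈ cutShift n S k i ↔ (j : ℕ) = i + k ∧ ∀ m ∈ S, m ≤ i ∨ j < m := by
  simp only [cutShift, PEquiv.coe_mk, Option.mem_def, Option.dite_none_right_eq_some,
    Option.some_inj, Fin.ext_iff]
  constructor
  · rintro ⟨⟨-, hS⟩, hj⟩
    exact ⟨hj.symm, by simpa only [hj] using hS⟩
  · rintro ⟨hj, hS⟩
    exact ⟨⟨hj ▸ j.2, by simpa only [hj] using hS⟩, hj.symm⟩

lemma isSome_cutShift {S : List ℕ} {k : ℕ} {i : Fin n} :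
    (cutShift n S k i).isSome ↔ (i : ℕ) + k < n ∧ ∀ m ∈ S, m ≤ i ∨ i + k < m := by
  simp [cutShift]

lemma cutShift_trans (S : List ℕ) (k l : ℕ) :
    (cutShift n S k).trans (cutShift n S l) = cutShift n S (k + l) := by
  refine PEquiv.ext fun i => Option.ext fun j => ?_
  simp only [← Option.mem_def, PEquiv.mem_trans, mem_cutShift]
  constructor
  · rintro ⟨b, ⟨hb, hib⟩, hj, hbj⟩
    refine ⟨by omega, fun m hm => ?_⟩
    have := hib m hm
    have := hbj m hm
    omega
  · rintro ⟨hj, hij⟩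
    refine ⟨⟨i + k, by omega⟩, ⟨rfl, fun m hm => ?_⟩, by simp only; omega, fun m hm => ?_⟩ <;>
    · have := hij m hm
      simp only
      omega

lemma cutShift_zero (S : List ℕ) : cutShift n S 0 = PEquiv.refl (Fin n) := by
  refine PEquiv.ext fun i => Option.ext fun j => ?_
  rw [← Option.mem_def, mem_cutShift, PEquiv.refl_apply, Option.some_inj, Fin.ext_iff]
  refine ⟨fun h => h.1.symm, fun h => ⟨h.symm, fun m _ => ?_⟩⟩
  omega

lemma toMatrix_cutShift_pow (S : List ℕ) (k : ℕ) :
    (cutShift n S 1).toMatrix ^ k = ((cutShift n S k).toMatrix : Matrix (Fin n) (Fin n) K) := by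
  induction k with
  | zero => rw [pow_zero, cutShift_zero, PEquiv.toMatrix_refl]
  | succ k ih => rw [pow_succ, ih, ← PEquiv.toMatrix_trans, cutShift_trans]

lemma jordanOf_sub_smul_one_eq_toMatrix (z : K) (mu : n.Partition) :
    jordanOf z mu - z • (1 : Matrix (Fin n) (Fin n) K) =
      (cutShift n (partialSums (sortedParts mu)) 1).toMatrix := by
  ext i j
  have not_cut_iff : (∀ m ∈ partialSums (sortedParts mu), m ≤ i ∨ (i : ℕ) + 1 < m) ↔
      (i : ℕ) + 1 ∉ partialSums (sortedParts mu) := by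
    refine ⟨fun h hm => ?_, fun h m hm => ?_⟩
    · have := h _ hm
      omega
    · have := ne_of_mem_of_not_mem hm h
      omega
  have mem_iff : j ∈ cutShift n (partialSums (sortedParts mu)) 1 i ↔
      (j : ℕ) = i + 1 ∧ (i : ℕ) + 1 ∉ partialSums (sortedParts mu) := by
    rw [mem_cutShift, ← not_cut_iff]
    exact and_congr_right fun h => by rw [h]
  rw [PEquiv.toMatrix_apply, if_congr mem_iff rfl rfl, jordanOf, Matrix.sub_apply,
    Matrix.of_apply, Matrix.smul_apply, Matrix.one_apply]
  rcases eq_or_ne i j with rfl | hij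
  · simp
  · simp [hij, Fin.val_ne_of_ne hij]

lemma mem_partialSums_cons {a m : ℕ} {l : List ℕ} :
    m ∈ partialSums (a :: l) ↔ m = a ∨ ∃ b ∈ partialSums l, m = a + b := by
  simp [partialSums, List.range_succ_eq_map, eq_comm]

lemma card_filter_range_sum_eq_excess (l : List ℕ) (k : ℕ) :
    ((Finset.range l.sum).filter fun i =>
      i + k < l.sum ∧ ∀ m ∈ partialSums l, m ≤ i ∨ i + k < m).card = excess l k := by
  induction l with
  | nil => simp [excess]
  | cons a l ih =>
    have first_block {i : ℕ} (hi : i < a) : (i + k < a + l.sum ∧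
        ∀ m ∈ partialSums (a :: l), m ≤ i ∨ i + k < m) ↔ i + k < a := by
      simp only [mem_partialSums_cons]
      refine ⟨fun h => (h.2 a (Or.inl rfl)).resolve_left hi.not_ge,
        fun h => ⟨by omega, fun m hm => Or.inr ?_⟩⟩
      rcases hm with rfl | ⟨b, -, rfl⟩ <;> omega
    have later_blocks (i : ℕ) : (a + i + k < a + l.sum ∧
        ∀ m ∈ partialSums (a :: l), m ≤ a + i ∨ a + i + k < m) ↔
        i + k < l.sum ∧ ∀ m ∈ partialSums l, m ≤ i ∨ i + k < m := by
      simp only [mem_partialSums_cons]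
      refine and_congr (by omega) ⟨fun h m hm => ?_, fun h m hm => ?_⟩
      · have := h _ (Or.inr ⟨m, hm, rfl⟩)
        omega
      · rcases hm with rfl | ⟨b, hb, rfl⟩
        · omega
        · have := h b hb
          omega
    rw [List.sum_cons, excess_coe_cons, ← ih, Finset.card_filter, Finset.sum_range_add,
      Finset.sum_congr rfl fun i hi => if_congr (first_block (Finset.mem_range.1 hi)) rfl rfl,
      Finset.sum_congr rfl fun i _ => if_congr (later_blocks i) rfl rfl, ← Finset.card_filter,
      ← Finset.card_filter, ← Finset.card_range (a - k)]
    congr 2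
    ext i
    simp only [Finset.mem_filter, Finset.mem_range]
    omega

lemma rank_jordanOf_sub_pow (z : K) (mu : n.Partition) (k : ℕ) :
    ((jordanOf z mu - z • (1 : Matrix (Fin n) (Fin n) K)) ^ k).rank = excess mu.parts k := by
  have sum_eq : (sortedParts mu).sum = n := by
    rw [← Multiset.sum_coe, coe_sortedParts, mu.parts_sum]
  rw [jordanOf_sub_smul_one_eq_toMatrix, toMatrix_cutShift_pow, rank_toMatrix_pequiv,
    ← coe_sortedParts, ← card_filter_range_sum_eq_excess, sum_eq, Fintype.card_subtype,
    Finset.card_filter, Finset.card_filter, ← Fin.sum_univ_eq_sum_range]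
  exact Finset.sum_congr rfl fun i _ => if_congr isSome_cutShift rfl rfl

lemma isNilpotent_jordanOf_sub (z : K) (mu : n.Partition) :
    IsNilpotent (jordanOf z mu - z • (1 : Matrix (Fin n) (Fin n) K)) := by
  have : cutShift n (partialSums (sortedParts mu)) n = ⊥ := by
    refine PEquiv.ext fun i => ?_
    rw [PEquiv.bot_apply, ← Option.not_isSome_iff_eq_none, isSome_cutShift]
    omega
  refine ⟨n, ?_⟩
  rw [jordanOf_sub_smul_one_eq_toMatrix, toMatrix_cutShift_pow, this, PEquiv.toMatrix_bot]

end JordanMatrix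

section Orbits

open Module

variable {K : Type*} [Field K] {n : ℕ} {ι : Type*} [Fintype ι] [DecidableEq ι]

lemma rank_pow_eq_finrank_range (A : Matrix ι ι K) (k : ℕ) :
    (A ^ k).rank = finrank K (LinearMap.range ((toLinAlgEquiv' A : End K (ι → K)) ^ k)) := by
  rw [← map_pow]
  rfl

lemma isNilpotent_of_rank_pow_eq_zero {A : Matrix ι ι K} {m : ℕ} (h : (A ^ m).rank = 0) :
    IsNilpotent A := by
  rw [rank_pow_eq_finrank_range, Submodule.finrank_eq_zero, LinearMap.range_eq_bot] at h
  exact ⟨m, toLinAlgEquiv'.injective (by rw [map_pow, map_zero, h])⟩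

lemma rank_eq_of_isConj {A B : Matrix ι ι K} (h : IsConj A B) : A.rank = B.rank := by
  obtain ⟨c, hc⟩ := h
  have isUnit_det : IsUnit (c : Matrix ι ι K).det := (Matrix.isUnit_iff_isUnit_det _).1 c.isUnit
  rw [← Matrix.rank_mul_eq_right_of_isUnit_det _ A isUnit_det, hc.eq,
    Matrix.rank_mul_eq_left_of_isUnit_det _ B isUnit_det]

lemma isConj_iff_rank_pow_eq {A B : Matrix ι ι K} (hA : IsNilpotent A) :
    IsConj A B ↔ ∀ k, (A ^ k).rank = (B ^ k).rank := by
  refine ⟨fun h k => rank_eq_of_isConj (h.pow k), fun h => ?_⟩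
  simp only [rank_pow_eq_finrank_range] at h
  have := isConj_of_finrank_range_pow_eq (hA.map toLinAlgEquiv') h
  simpa using MonoidHom.map_isConj
    (toLinAlgEquiv' : Matrix ι ι K ≃ₐ[K] End K (ι → K)).symm.toMulEquiv.toMonoidHom this

lemma isConj_sub_smul_one_iff {R : Type*} [Ring R] [Algebra K R] {a b : R} {z : K} :
    IsConj (a - z • 1) (b - z • 1) ↔ IsConj a b := by
  simp [IsConj, SemiconjBy, mul_sub, sub_mul]

lemma mem_adjOrbit_iff_isConj {A B : Matrix (Fin n) (Fin n) K} : B ∈ adjOrbit A ↔ IsConj A B :=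
  exists_congr fun c => (Units.eq_mul_inv_iff_mul_eq c).trans eq_comm

lemma mem_adjOrbit_iff_rank_pow_eq {A B : Matrix (Fin n) (Fin n) K} {z : K}
    (hA : IsNilpotent (A - z • 1)) :
    B ∈ adjOrbit A ↔ ∀ k, ((B - z • 1) ^ k).rank = ((A - z • 1) ^ k).rank := by
  rw [mem_adjOrbit_iff_isConj, ← isConj_sub_smul_one_iff (z := z), isConj_iff_rank_pow_eq hA]
  exact forall_congr' fun k => eq_comm

lemma exists_partition_rank_pow_eq_excess {A : Matrix (Fin n) (Fin n) K} (hA : IsNilpotent A) :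
    ∃ p : n.Partition, ∀ k, (A ^ k).rank = excess p.parts k := by
  have := exists_partition_finrank_range_pow_eq_excess (hA.map toLinAlgEquiv')
  simp only [← rank_pow_eq_finrank_range] at this
  rwa [finrank_fin_fun] at this

lemma mem_adjOrbit_jordanOf_iff {X : Matrix (Fin n) (Fin n) K} {z : K} {rho : n.Partition} :
    X ∈ adjOrbit (jordanOf z rho) ↔ ∀ k, ((X - z • 1) ^ k).rank = excess rho.parts k := by
  simp only [mem_adjOrbit_iff_rank_pow_eq (isNilpotent_jordanOf_sub z rho), rank_jordanOf_sub_pow]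

lemma exists_mem_adjOrbit_jordanOf {X : Matrix (Fin n) (Fin n) K} {z : K}
    (hX : IsNilpotent (X - z • 1)) : ∃ rho : n.Partition, X ∈ adjOrbit (jordanOf z rho) := by
  simpa only [mem_adjOrbit_jordanOf_iff] using exists_partition_rank_pow_eq_excess hX

end Orbits

section Closure

variable {K : Type*} [Field K] {n : ℕ} {ι σ : Type*} [Fintype ι]

/-- The polynomial is a minor of `M`, after multiplication by constant invertible matrices that
bring `M` into rank normal form at `x₀`. -/
lemma exists_eval_ne_zero_rank_le (M : Matrix ι ι (MvPolynomial σ K)) (x₀ : σ → K) :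
    ∃ g : MvPolynomial σ K, MvPolynomial.eval x₀ g ≠ 0 ∧ ∀ x, MvPolynomial.eval x g ≠ 0 →
      (M.map (MvPolynomial.eval x₀)).rank ≤ (M.map (MvPolynomial.eval x)).rank := by
  classical
  obtain ⟨V, U, e, -, -, normal_form⟩ :=
    Matrix.exists_rank_normal_form (M.map (MvPolynomial.eval x₀))
  let f := e.symm ∘ Sum.inl
  let minor := ((V.map MvPolynomial.C * M * U.map MvPolynomial.C).submatrix f f).det
  have eval_minor (x : σ → K) : MvPolynomial.eval x minor =
      ((V * M.map (MvPolynomial.eval x) * U).submatrix f f).det := by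
    simp only [minor]
    rw [RingHom.map_det, RingHom.mapMatrix_apply, ← Matrix.submatrix_map, Matrix.map_mul,
      Matrix.map_mul]
    simp [Matrix.map_map, Function.comp_def]
  refine ⟨minor, ?_, fun x hx => ?_⟩
  · have : (V * M.map (MvPolynomial.eval x₀) * U).submatrix f f = 1 := by
      rw [normal_form, Matrix.submatrix_submatrix]
      ext i j
      simp [f]
    rw [eval_minor, this, Matrix.det_one]
    exact one_ne_zero
  · rw [eval_minor] at hx
    calc (M.map (MvPolynomial.eval x₀)).rank
        = ((V * M.map (MvPolynomial.eval x) * U).submatrix f f).rank := by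
          rw [Matrix.rank_of_det_ne_zero hx, Fintype.card_fin]
      _ ≤ (V * M.map (MvPolynomial.eval x) * U).rank := Matrix.rank_submatrix_le _ _ _
      _ ≤ (V * M.map (MvPolynomial.eval x)).rank := Matrix.rank_mul_le_left _ _
      _ ≤ (M.map (MvPolynomial.eval x)).rank := Matrix.rank_mul_le_right _ _

variable [DecidableEq ι]

lemma exists_eval_ne_zero_rank_sub_pow_le (A₀ : Matrix ι ι K) (z : K) (k : ℕ) :
    ∃ g : MvPolynomial (ι × ι) K, MvPolynomial.eval (fun p => A₀ p.1 p.2) g ≠ 0 ∧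
      ∀ A : Matrix ι ι K, MvPolynomial.eval (fun p => A p.1 p.2) g ≠ 0 →
        ((A₀ - z • 1) ^ k).rank ≤ ((A - z • 1) ^ k).rank := by
  let M : Matrix ι ι (MvPolynomial (ι × ι) K) := (mvPolynomialX ι ι K - z • 1) ^ k
  have map_M (A : Matrix ι ι K) :
      M.map (MvPolynomial.eval fun p => A p.1 p.2) = (A - z • 1) ^ k := by
    have := map_pow (MvPolynomial.aeval (R := K) fun p : ι × ι => A p.1 p.2).mapMatrix
      (mvPolynomialX ι ι K - z • 1) k
    rwa [map_sub, map_smul, map_one, mvPolynomialX_mapMatrix_aeval] at this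
  obtain ⟨g, hg, hle⟩ := exists_eval_ne_zero_rank_le M fun p => A₀ p.1 p.2
  refine ⟨g, hg, fun A hA => ?_⟩
  rw [← map_M, ← map_M]
  exact hle _ hA

lemma rank_sub_pow_le_of_mem_zariskiClosure {S : Set (Matrix (Fin n) (Fin n) K)}
    {X : Matrix (Fin n) (Fin n) K} (hX : X ∈ zariskiClosure S) {z : K} {k r : ℕ}
    (hr : ∀ A ∈ S, ((A - z • 1) ^ k).rank ≤ r) : ((X - z • 1) ^ k).rank ≤ r := by
  obtain ⟨g, hg, hle⟩ := exists_eval_ne_zero_rank_sub_pow_le X z k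
  by_contra! hlt
  refine hg (hX g fun A hA => ?_)
  by_contra hgA
  exact ((hle A hgA).trans (hr A hA)).not_gt hlt

lemma mem_zariskiClosure_of_lineMap_mem [Infinite K] {S : Set (Matrix (Fin n) (Fin n) K)}
    {X Y : Matrix (Fin n) (Fin n) K} {g : MvPolynomial (Fin n × Fin n) K}
    (hg : MvPolynomial.eval (fun p => Y p.1 p.2) g ≠ 0)
    (h : ∀ t : K, MvPolynomial.eval (fun p => AffineMap.lineMap X Y t p.1 p.2) g ≠ 0 →
      AffineMap.lineMap X Y t ∈ S) : X ∈ zariskiClosure S := by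
  intro f hf
  let restrict : MvPolynomial (Fin n × Fin n) K →ₐ[K] Polynomial K := MvPolynomial.aeval
    fun p => Polynomial.C (X p.1 p.2) + Polynomial.X * Polynomial.C (Y p.1 p.2 - X p.1 p.2)
  have eval_restrict (t : K) (f : MvPolynomial (Fin n × Fin n) K) : (restrict f).eval t =
      MvPolynomial.eval (fun p => AffineMap.lineMap X Y t p.1 p.2) f := by
    rw [← Polynomial.coe_aeval_eq_eval, ← MvPolynomial.aeval_eq_eval]
    simp only [restrict]
    rw [← AlgHom.comp_apply, MvPolynomial.comp_aeval]
    congr 2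
    ext p
    simp [AffineMap.lineMap_apply, add_comm]
  have restrict_mul : restrict g * restrict f = 0 := Polynomial.funext fun t => by
    rw [Polynomial.eval_mul, Polynomial.eval_zero, mul_eq_zero, or_iff_not_imp_left,
      eval_restrict, eval_restrict]
    exact fun ht => hf _ (h t ht)
  have restrict_g : restrict g ≠ 0 := fun h0 => hg <| by
    simpa [h0] using (eval_restrict 1 g).symm
  have restrict_f : restrict f = 0 := (mul_eq_zero.1 restrict_mul).resolve_left restrict_g
  simpa [restrict_f] using (eval_restrict 0 f).symm

lemma exists_rank_pow_lineMap_le (N : Matrix ι ι K) {r : ℕ → ℕ} (hr : IsConvexSeq r)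
    (hanti : Antitone r) {m : ℕ} (hm : r m = 0) (h0 : r 0 = Fintype.card ι)
    (hN : ∀ k, (N ^ k).rank ≤ r k) :
    ∃ Y : Matrix ι ι K, (∀ k, (Y ^ k).rank = r k) ∧
      ∀ (t : K) k, (AffineMap.lineMap N Y t ^ k).rank ≤ r k := by
  obtain ⟨Y, finrank_Y, finrank_lineMap⟩ := exists_finrank_range_pow_lineMap_le
    (toLinAlgEquiv' N : Module.End K (ι → K)) hr hanti hm
    (by rw [h0, Module.finrank_fintype_fun_eq_card])
    (fun k => rank_pow_eq_finrank_range N k ▸ hN k)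
  refine ⟨toLinAlgEquiv'.symm Y, fun k => ?_, fun t k => ?_⟩
  · rw [rank_pow_eq_finrank_range, AlgEquiv.apply_symm_apply, finrank_Y]
  · have map_lineMap : toLinAlgEquiv' (AffineMap.lineMap N (toLinAlgEquiv'.symm Y) t) =
        AffineMap.lineMap (toLinAlgEquiv' N) Y t := by
      simp only [AffineMap.lineMap_apply_module, map_add, map_smul, AlgEquiv.apply_symm_apply]
    rw [rank_pow_eq_finrank_range, map_lineMap]
    exact finrank_lineMap t k

lemma mem_zariskiClosure_adjOrbit_of_rank_pow_le [Infinite K] {A X : Matrix (Fin n) (Fin n) K}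
    {z : K} (hA : IsNilpotent (A - z • 1))
    (h : ∀ k, ((X - z • 1) ^ k).rank ≤ ((A - z • 1) ^ k).rank) :
    X ∈ zariskiClosure (adjOrbit A) := by
  obtain ⟨p, hp⟩ := exists_partition_rank_pow_eq_excess hA
  have excess_n : excess p.parts n = 0 := excess_parts_self p
  simp only [hp] at h
  obtain ⟨Y, rank_Y, rank_lineMap⟩ := exists_rank_pow_lineMap_le (X - z • 1)
    (isConvexSeq_excess _) (excess_antitone _) excess_n (by simp [p.parts_sum]) h
  have lineMap_sub (t : K) : AffineMap.lineMap X (Y + z • 1) t - z • 1 =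
      AffineMap.lineMap (X - z • 1) Y t := by
    simp only [AffineMap.lineMap_apply_module]
    module
  choose g hg hle using exists_eval_ne_zero_rank_sub_pow_le (Y + z • 1) z
  refine mem_zariskiClosure_of_lineMap_mem (g := ∏ k ∈ Finset.range n, g k) (Y := Y + z • 1)
    ?_ fun t ht => ?_
  · rw [map_prod]
    exact Finset.prod_ne_zero_iff.2 fun k _ => hg k
  · rw [map_prod, Finset.prod_ne_zero_iff] at ht
    simp only [mem_adjOrbit_iff_rank_pow_eq hA, hp, lineMap_sub]
    refine fun k => (rank_lineMap t k).antisymm ?_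
    rcases lt_or_ge k n with hk | hk
    · simpa only [add_sub_cancel_right, rank_Y, lineMap_sub] using
        hle k _ (ht k (Finset.mem_range.2 hk))
    · exact ((excess_antitone _ hk).trans_eq excess_n).trans (Nat.zero_le _)

lemma mem_zariskiClosure_adjOrbit_iff [Infinite K] {A X : Matrix (Fin n) (Fin n) K} {z : K}
    (hA : IsNilpotent (A - z • 1)) :
    X ∈ zariskiClosure (adjOrbit A) ↔
      ∀ k, ((X - z • 1) ^ k).rank ≤ ((A - z • 1) ^ k).rank :=
  ⟨fun h k => rank_sub_pow_le_of_mem_zariskiClosure h fun _ hB =>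
    ((mem_adjOrbit_iff_rank_pow_eq hA).1 hB k).le, mem_zariskiClosure_adjOrbit_of_rank_pow_le hA⟩

end Closure

theorem stmt_17_general {K : Type*} [Field K] [Infinite K] (n : ℕ) (z : K) (mu : n.Partition) :
    zariskiClosure (adjOrbit (jordanOf z mu))
        = {B | ∃ rho : n.Partition, DominatedBy rho mu ∧ B ∈ adjOrbit (jordanOf z rho)}
      ∧ (∀ rho rho' : n.Partition, rho ≠ rho' →
          Disjoint (adjOrbit (jordanOf z rho)) (adjOrbit (jordanOf z rho')))
      ∧ (∀ X : Matrix (Fin n) (Fin n) K,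
          X ∈ zariskiClosure (adjOrbit (jordanOf z mu)) ↔
            ∀ k : ℕ, 1 ≤ k →
              ((X - z • (1 : Matrix (Fin n) (Fin n) K)) ^ k).rank
                ≤ ((jordanOf z mu - z • (1 : Matrix (Fin n) (Fin n) K)) ^ k).rank) := by
  have mem_closure_iff (X : Matrix (Fin n) (Fin n) K) :=
    mem_zariskiClosure_adjOrbit_iff (X := X) (isNilpotent_jordanOf_sub z mu)
  refine ⟨Set.ext fun X => ?_, fun rho rho' hne => ?_, fun X => ?_⟩
  · simp only [mem_closure_iff, rank_jordanOf_sub_pow, dominatedBy_iff_excess_le, Set.mem_ofPred_eq]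
    constructor
    · intro h
      have hX : IsNilpotent (X - z • 1) := isNilpotent_of_rank_pow_eq_zero
        (Nat.eq_zero_of_le_zero ((h n).trans_eq (excess_parts_self mu)))
      obtain ⟨rho, hrho⟩ := exists_mem_adjOrbit_jordanOf hX
      exact ⟨rho, fun k => (mem_adjOrbit_jordanOf_iff.1 hrho k).symm.trans_le (h k), hrho⟩
    · rintro ⟨rho, hle, hX⟩ k
      exact (mem_adjOrbit_jordanOf_iff.1 hX k).trans_le (hle k)
  · refine Set.disjoint_left.2 fun X h h' => hne (Nat.Partition.ext ?_)
    exact eq_of_excess_eq (zero_notMem_parts rho) (zero_notMem_parts rho') fun k =>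
      (mem_adjOrbit_jordanOf_iff.1 h k).symm.trans (mem_adjOrbit_jordanOf_iff.1 h' k)
  · rw [mem_closure_iff]
    refine ⟨fun h k _ => h k, fun h k => ?_⟩
    rcases k.eq_zero_or_pos with rfl | hk
    · simp only [pow_zero, le_refl]
    · exact h k hk

theorem stmt_17 {K : Type*} [Field K] [IsAlgClosed K] (n : ℕ) (z : K)
    (mu : Nat.Partition n) :
    zariskiClosure (adjOrbit (jordanOf z mu))
        = {B | ∃ rho : Nat.Partition n, DominatedBy rho mu ∧ B ∈ adjOrbit (jordanOf z rho)}
      ∧ (∀ rho rho' : Nat.Partition n, rho ≠ rho' →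
          Disjoint (adjOrbit (jordanOf (n := n) z rho)) (adjOrbit (jordanOf z rho')))
      ∧ (∀ X : Matrix (Fin n) (Fin n) K, IsNilpotent (X - z • (1 : Matrix (Fin n) (Fin n) K)) →
          (X ∈ zariskiClosure (adjOrbit (jordanOf z mu)) ↔
            ∀ k : ℕ, 1 ≤ k →
              ((X - z • (1 : Matrix (Fin n) (Fin n) K)) ^ k).rank
                ≤ ((jordanOf z mu - z • (1 : Matrix (Fin n) (Fin n) K)) ^ k).rank)) := by
  have : Infinite K := IsAlgClosed.instInfinite
  obtain ⟨closure_eq, orbits_disjoint, mem_closure_iff⟩ := stmt_17_general n z mu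
  exact ⟨closure_eq, orbits_disjoint, fun X _ => mem_closure_iff X⟩
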